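/- (Preserved Farthest Neighbours) In the robot model on a line, assume the visibility graph at time 0 is connected. Then there exist a time t₀ and maps ρ, λ : Fin (n+1) → Fin (n+1) such that for every t ≥ t₀ and every robot i: ρ i ∈ N(i,t) with x t (ρ i) = r(i,t), and λ i ∈ N(i,t) with x t (λ i) = l(i,t). That is, from some time on, the farthest right and farthest left visible neighbours of every robot are realized by fixed robots that never change. -/

import Mathlib

open Filter Topology

/-- Position of the farthest left robot visible from robot `i` at time `t`
(visibility radius `V`). -/
noncomputable def lpos {n : ℕ} (V : ℝ) (x : ℕ → Fin (n + 1) → ℝ)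
    (t : ℕ) (i : Fin (n + 1)) : ℝ :=
  sInf (x t '' {j | |x t j - x t i| ≤ V})

/-- Position of the farthest right robot visible from robot `i` at time `t`
(visibility radius `V`). -/
noncomputable def rpos {n : ℕ} (V : ℝ) (x : ℕ → Fin (n + 1) → ℝ)
    (t : ℕ) (i : Fin (n + 1)) : ℝ :=
  sSup (x t '' {j | |x t j - x t i| ≤ V})

/-!
Visible robots stay visible, so on a finite set of robots the visibility graph is eventually
constant. A non-faulty robot never overtakes another one. What has to be excluded is that a robot
keeps changing sides of a faulty robot `p` in its component of the graph. By symmetry let `p` be a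
leftmost faulty robot, and suppose that the component always contains robots to the left of `p`.
Its leftmost robot `a` is then non-faulty and moves to the right, bounded by `p`. So its steps tend
to zero, and since a step is half the distance to the farthest visible robot, the neighbours of `a`
come arbitrarily close to `a`. A non-faulty neighbour of `a` therefore cannot see a robot hidden
from `a`, as it would be drawn away from `a`, and walking from `a` to `p` shows that `a` sees `p`.
Now a non-faulty robot visible from `a` sees nothing farther to the right than `a` does, so it stays
to the left of `p` with `a`, and a robot of the component hidden from `a` is to the right of `p`.
-/

section Visibility

variable {ι : Type*} {V : ℝ} {y : ι → ℝ} {i j a b : ι}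

/-- Robots `i` and `j` see each other when the robots are placed at the positions `y`. -/
def Visible (V : ℝ) (y : ι → ℝ) (i j : ι) : Prop :=
  |y j - y i| ≤ V

/-- Robot `a` is a farthest left robot visible from robot `i` in the placement `y`. It need not be
the only one, since several robots may share a position. -/
def IsFarthestLeft (V : ℝ) (y : ι → ℝ) (i a : ι) : Prop :=
  Visible V y i a ∧ ∀ k, Visible V y i k → y a ≤ y k

/-- Robot `b` is a farthest right robot visible from robot `i` in the placement `y`. -/
def IsFarthestRight (V : ℝ) (y : ι → ℝ) (i b : ι) : Prop :=
  Visible V y i b ∧ ∀ k, Visible V y i k → y k ≤ y b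

/-- Robots `i` and `j` lie in the same component of the visibility graph of the placement `y`. -/
abbrev SameComponent (V : ℝ) (y : ι → ℝ) (i j : ι) : Prop :=
  Relation.ReflTransGen (Visible V y) i j

lemma Visible.refl (hV : 0 ≤ V) (y : ι → ℝ) (i : ι) : Visible V y i i := by
  simpa [Visible] using hV

lemma Visible.symm (h : Visible V y i j) : Visible V y j i := by
  rwa [Visible, abs_sub_comm]

lemma Visible.radius_nonneg (h : Visible V y i j) : 0 ≤ V :=
  (abs_nonneg _).trans h

instance : Std.Symm (Visible V y) :=
  ⟨fun _ _ => Visible.symm⟩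

lemma SameComponent.symm (h : SameComponent V y i j) : SameComponent V y j i :=
  symm_of (Relation.ReflTransGen (Visible V y)) h

lemma visible_neg (V : ℝ) (y : ι → ℝ) : Visible V (-y) = Visible V y := by
  ext i j
  rw [Visible, Visible, Pi.neg_apply, Pi.neg_apply, neg_sub_neg, abs_sub_comm]

lemma sameComponent_neg : SameComponent V (-y) i j ↔ SameComponent V y i j := by
  rw [SameComponent, visible_neg]

lemma isFarthestLeft_neg : IsFarthestLeft V (-y) i a ↔ IsFarthestRight V y i a := by
  simp only [IsFarthestLeft, IsFarthestRight, visible_neg, Pi.neg_apply, neg_le_neg_iff]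

lemma isFarthestRight_neg : IsFarthestRight V (-y) i b ↔ IsFarthestLeft V y i b := by
  simp only [IsFarthestLeft, IsFarthestRight, visible_neg, Pi.neg_apply, neg_le_neg_iff]

lemma exists_isFarthestLeft [Finite ι] (hV : 0 ≤ V) (y : ι → ℝ) (i : ι) :
    ∃ a, IsFarthestLeft V y i a :=
  Set.exists_min_image {k | Visible V y i k} y (Set.toFinite _) ⟨i, Visible.refl hV y i⟩

lemma exists_isFarthestRight [Finite ι] (hV : 0 ≤ V) (y : ι → ℝ) (i : ι) :
    ∃ b, IsFarthestRight V y i b :=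
  Set.exists_max_image {k | Visible V y i k} y (Set.toFinite _) ⟨i, Visible.refl hV y i⟩

lemma IsFarthestLeft.mono (hij : y i ≤ y j) (ha : IsFarthestLeft V y i a)
    (hb : IsFarthestLeft V y j b) : y a ≤ y b := by
  have hai : y a ≤ y i := ha.2 i (Visible.refl ha.1.radius_nonneg y i)
  by_contra! hba
  have hb_visible : Visible V y i b := by
    have hjb := abs_le.1 hb.1
    exact abs_le.2 ⟨by linarith, by linarith [hb.1.radius_nonneg]⟩
  exact hba.not_ge (ha.2 b hb_visible)

lemma IsFarthestRight.mono (hij : y i ≤ y j) (ha : IsFarthestRight V y i a)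
    (hb : IsFarthestRight V y j b) : y a ≤ y b :=
  neg_le_neg_iff.1 <| IsFarthestLeft.mono (y := -y) (neg_le_neg hij)
    (isFarthestLeft_neg.2 hb) (isFarthestLeft_neg.2 ha)

end Visibility

section Positions

variable {n : ℕ} {V : ℝ} {x : ℕ → Fin (n + 1) → ℝ} {t : ℕ} {i a b : Fin (n + 1)}

lemma IsFarthestLeft.eq_lpos (ha : IsFarthestLeft V (x t) i a) : x t a = lpos V x t i :=
  Eq.symm <| IsLeast.csInf_eq ⟨Set.mem_image_of_mem _ ha.1, Set.forall_mem_image.2 ha.2⟩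

lemma IsFarthestRight.eq_rpos (hb : IsFarthestRight V (x t) i b) : x t b = rpos V x t i :=
  Eq.symm <| IsGreatest.csSup_eq ⟨Set.mem_image_of_mem _ hb.1, Set.forall_mem_image.2 hb.2⟩

end Positions

/-- The trajectories `x` follow the robot model with visibility radius `V` and set `F` of faulty
robots. Witnesses for the farthest neighbours take the place of `lpos` and `rpos`, so that robots
may be indexed by any type and no infimum can take a junk value. -/
structure IsExecution {ι : Type*} (V : ℝ) (F : Set ι) (x : ℕ → ι → ℝ) : Prop where
  fixed : ∀ t, ∀ i ∈ F, x t i = x 0 i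
  midpoint : ∀ t, ∀ i ∉ F, ∃ a b, IsFarthestLeft V (x t) i a ∧ IsFarthestRight V (x t) i b ∧
    x (t + 1) i = (x t a + x t b) / 2

/-- An execution whose visibility graph does not change, so that it can be read off at time `0`. -/
structure IsSettledExecution {ι : Type*} (V : ℝ) (F : Set ι) (x : ℕ → ι → ℝ) : Prop
    extends IsExecution V F x where
  visible : ∀ ⦃s i j⦄, Visible V (x s) i j → ∀ t, Visible V (x t) i j

/-- The non-faulty robot `a` is at all times a leftmost robot of its component at time `0`. -/
structure IsLeftmostRobot {ι : Type*} (V : ℝ) (F : Set ι) (x : ℕ → ι → ℝ) (a : ι) : Prop where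
  notMem : a ∉ F
  le : ∀ t k, SameComponent V (x 0) a k → x t a ≤ x t k

namespace IsExecution

variable {ι : Type*} {V : ℝ} {F : Set ι} {x : ℕ → ι → ℝ} {s t : ℕ} {i j : ι}

lemma neg (h : IsExecution V F x) : IsExecution V F (-x) where
  fixed t i hi := congrArg Neg.neg (h.fixed t i hi)
  midpoint t i hi := by
    obtain ⟨a, b, ha, hb, hab⟩ := h.midpoint t i hi
    refine ⟨b, a, isFarthestLeft_neg.2 hb, isFarthestRight_neg.2 ha, ?_⟩
    simp only [Pi.neg_apply, hab]
    ring

lemma shift (h : IsExecution V F x) (T : ℕ) : IsExecution V F fun t => x (t + T) where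
  fixed t i hi := (h.fixed (t + T) i hi).trans (h.fixed (0 + T) i hi).symm
  midpoint t i hi := by simpa only [add_right_comm t 1 T] using h.midpoint (t + T) i hi

lemma abs_succ_sub_midpoint_le (h : IsExecution V F x) (hij : Visible V (x t) i j) :
    |x (t + 1) i - (x t i + x t j) / 2| ≤ V / 2 := by
  have hij' := abs_le.1 hij
  by_cases hi : i ∈ F
  · rw [h.fixed (t + 1) i hi, ← h.fixed t i hi]
    exact abs_le.2 ⟨by linarith, by linarith⟩
  · obtain ⟨a, b, ha, hb, hab⟩ := h.midpoint t i hi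
    have haj := ha.2 j hij
    have hjb := hb.2 j hij
    have hia := abs_le.1 ha.1
    have hib := abs_le.1 hb.1
    exact abs_le.2 ⟨by linarith, by linarith⟩

lemma visible_succ (h : IsExecution V F x) (hij : Visible V (x t) i j) :
    Visible V (x (t + 1)) i j := by
  have hi := abs_le.1 (h.abs_succ_sub_midpoint_le hij)
  have hj := abs_le.1 (h.abs_succ_sub_midpoint_le hij.symm)
  exact abs_le.2 ⟨by linarith, by linarith⟩

lemma visible_of_le (h : IsExecution V F x) (hst : s ≤ t) (hij : Visible V (x s) i j) :
    Visible V (x t) i j :=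
  Nat.le_induction hij (fun _ _ => h.visible_succ) t hst

lemma succ_le_succ (h : IsExecution V F x) (hi : i ∉ F) (hj : j ∉ F) (hij : x t i ≤ x t j) :
    x (t + 1) i ≤ x (t + 1) j := by
  obtain ⟨a, b, ha, hb, hab⟩ := h.midpoint t i hi
  obtain ⟨c, d, hc, hd, hcd⟩ := h.midpoint t j hj
  linarith [ha.mono hij hc, hb.mono hij hd]

lemma le_of_zero_le (h : IsExecution V F x) (hi : i ∉ F) (hj : j ∉ F) (hij : x 0 i ≤ x 0 j)
    (t : ℕ) : x t i ≤ x t j :=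
  Nat.rec hij (fun _ => h.succ_le_succ hi hj) t

lemma exists_shift_isSettledExecution [Finite ι] (h : IsExecution V F x) :
    ∃ T, IsSettledExecution V F fun t => x (t + T) := by
  have hpair : ∀ i j, ∀ᶠ T in atTop, ∀ s, Visible V (x s) i j → Visible V (x T) i j := by
    intro i j
    by_cases hij : ∃ s, Visible V (x s) i j
    · obtain ⟨s, hs⟩ := hij
      filter_upwards [eventually_ge_atTop s] with T hT _ _ using h.visible_of_le hT hs
    · exact Eventually.of_forall fun T s hs => absurd ⟨s, hs⟩ hij
  obtain ⟨T, hT⟩ := (eventually_all.2 fun i => eventually_all.2 (hpair i)).exists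
  exact ⟨T, h.shift T, fun s i j hij t =>
    h.visible_of_le (Nat.le_add_left T t) (hT i j (s + T) hij)⟩

lemma exists_leftmost_below [Finite ι] (h : IsExecution V F x) {P : ℝ} {p : ι}
    (hF : ∀ f ∈ F, P ≤ x 0 f)
    (hbelow : ∀ t, ∃ k, SameComponent V (x 0) p k ∧ x t k < P) :
    ∃ a, SameComponent V (x 0) p a ∧ IsLeftmostRobot V F x a ∧ ∀ t, x t a ≤ P := by
  have hnotMem {t : ℕ} {k : ι} (hk : x t k < P) : k ∉ F := fun hkF =>
    (hF k hkF).not_gt (h.fixed t k hkF ▸ hk)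
  obtain ⟨k₀, hk₀, hk₀P⟩ := hbelow 0
  obtain ⟨a, hpa, hmin⟩ := Set.exists_min_image {k | SameComponent V (x 0) p k} (x 0)
    (Set.toFinite _) ⟨k₀, hk₀⟩
  have ha : a ∉ F := hnotMem ((hmin k₀ hk₀).trans_lt hk₀P)
  have haP (t : ℕ) : x t a ≤ P := by
    obtain ⟨k, hk, hkP⟩ := hbelow t
    exact (h.le_of_zero_le ha (hnotMem hkP) (hmin k hk) t).trans hkP.le
  refine ⟨a, hpa, ⟨ha, fun t k hak => ?_⟩, haP⟩
  by_cases hk : k ∈ F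
  · exact (haP t).trans ((hF k hk).trans_eq (h.fixed t k hk).symm)
  · exact h.le_of_zero_le ha hk (hmin k (hpa.trans hak)) t

end IsExecution

namespace IsSettledExecution

variable {ι : Type*} {V P : ℝ} {F : Set ι} {x : ℕ → ι → ℝ} {s t : ℕ} {a i j k m p : ι}

lemma neg (h : IsSettledExecution V F x) : IsSettledExecution V F (-x) where
  toIsExecution := h.toIsExecution.neg
  visible := by simpa only [Pi.neg_apply, visible_neg] using h.visible

lemma forall_ge_of_le (h : IsSettledExecution V F x)
    (hP : ∀ k, SameComponent V (x 0) i k → P ≤ x s k) (hst : s ≤ t) :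
    ∀ k, SameComponent V (x 0) i k → P ≤ x t k := by
  induction t, hst using Nat.le_induction with
  | base => exact hP
  | succ t _ ih =>
    intro k hik
    by_cases hk : k ∈ F
    · exact (ih k hik).trans_eq ((h.fixed t k hk).trans (h.fixed (t + 1) k hk).symm)
    · obtain ⟨c, d, hc, hd, hcd⟩ := h.midpoint t k hk
      have hPc := ih c (hik.tail (h.visible hc.1 0))
      have hPd := ih d (hik.tail (h.visible hd.1 0))
      linarith

lemma add_le_two_mul_succ (h : IsSettledExecution V F x) (ha : IsLeftmostRobot V F x a)
    (hak : Visible V (x t) a k) : x t a + x t k ≤ 2 * x (t + 1) a := by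
  obtain ⟨c, d, hc, hd, hcd⟩ := h.midpoint t a ha.notMem
  have hac := ha.le t c (.single (h.visible hc.1 0))
  have hkd := hd.2 k hak
  linarith

lemma exists_neighbours_le (h : IsSettledExecution V F x) (ha : IsLeftmostRobot V F x a)
    (hP : ∀ t, x t a ≤ P) {ε : ℝ} (hε : 0 < ε) :
    ∃ t, ∀ k, Visible V (x 0) a k → x t k ≤ x t a + ε ∧ x (t + 1) k ≤ x t a + ε := by
  have hbdd : BddAbove (Set.range (x · a)) := ⟨P, Set.forall_mem_range.2 hP⟩
  obtain ⟨t, ht⟩ : ∃ t, (⨆ s, x s a) - ε / 2 < x t a := exists_lt_of_lt_ciSup (by linarith)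
  have hle (s : ℕ) : x s a ≤ x t a + ε / 2 := by linarith [le_ciSup hbdd s]
  refine ⟨t, fun k hak => ⟨?_, ?_⟩⟩
  · linarith [h.add_le_two_mul_succ ha (h.visible hak t), hle (t + 1)]
  · have hself := h.add_le_two_mul_succ ha (Visible.refl hak.radius_nonneg (x t) a)
    linarith [h.add_le_two_mul_succ ha (h.visible hak (t + 1)), hle (t + 2)]

lemma faulty_neighbour_le (h : IsSettledExecution V F x) (ha : IsLeftmostRobot V F x a)
    (hP : ∀ t, x t a ≤ P) (hp : p ∈ F) (hap : Visible V (x 0) a p) : x 0 p ≤ P := by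
  refine le_of_forall_pos_le_add fun ε hε => ?_
  obtain ⟨t, ht⟩ := h.exists_neighbours_le ha hP hε
  linarith [(ht p hap).1, hP t, h.fixed t p hp]

lemma visible_trans_of_leftmost (h : IsSettledExecution V F x) (hV : 0 < V)
    (ha : IsLeftmostRobot V F x a) (hP : ∀ t, x t a ≤ P) (hk : k ∉ F)
    (hak : Visible V (x 0) a k) (hkj : Visible V (x 0) k j) : Visible V (x 0) a j := by
  obtain ⟨t, ht⟩ := h.exists_neighbours_le ha hP (half_pos hV)
  obtain ⟨c, d, hc, hd, hcd⟩ := h.midpoint t k hk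
  have hac := ha.le t c (.tail (.single hak) (h.visible hc.1 0))
  have hjd := hd.2 j (h.visible hkj t)
  have haj := ha.le t j (.tail (.single hak) hkj)
  have hk_succ := (ht k hak).2
  exact h.visible (s := t) (abs_le.2 ⟨by linarith, by linarith⟩) 0

lemma visible_faulty_of_isMinOn (h : IsSettledExecution V F x) (hV : 0 < V)
    (ha : IsLeftmostRobot V F x a) (hP : ∀ t, x t a ≤ x 0 p) (hp : IsMinOn (x 0) F p)
    (hap : SameComponent V (x 0) a p) : Visible V (x 0) a p := by
  by_contra hnot
  have hcomp : ∀ j, SameComponent V (x 0) a j → Visible V (x 0) a j := by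
    intro j hj
    induction hj with
    | refl => exact Visible.refl hV.le (x 0) a
    | @tail k j _ hkj hak =>
      have hk : k ∉ F := by
        intro hk
        have hkp : x 0 k = x 0 p := (h.faulty_neighbour_le ha hP hk hak).antisymm (hp hk)
        exact hnot (by rwa [Visible, ← hkp])
      exact h.visible_trans_of_leftmost hV ha hP hk hak hkj
  exact hnot (hcomp p hap)

lemma neighbour_succ_le_leftmost (h : IsSettledExecution V F x) (hV : 0 < V)
    (ha : IsLeftmostRobot V F x a) (hP : ∀ t, x t a ≤ P) (hm : m ∉ F)
    (ham : Visible V (x 0) a m) (t : ℕ) : x (t + 1) m ≤ x (t + 1) a := by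
  obtain ⟨c, d, hc, hd, hcd⟩ := h.midpoint t m hm
  have had : Visible V (x 0) a d :=
    h.visible_trans_of_leftmost hV ha hP hm ham (h.visible hd.1 0)
  have hca := hc.2 a (h.visible ham t).symm
  linarith [h.add_le_two_mul_succ ha (h.visible had t)]

lemma eventuallyLE_total_of_isMinOn [Finite ι] (h : IsSettledExecution V F x) (hV : 0 < V)
    (hpF : p ∈ F) (hp : IsMinOn (x 0) F p) (hpm : SameComponent V (x 0) p m) :
    (x · p) ≤ᶠ[atTop] (x · m) ∨ (x · m) ≤ᶠ[atTop] (x · p) := by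
  by_cases hm : m ∈ F
  · refine .inl <| .of_forall fun t => ?_
    simpa only [h.fixed t p hpF, h.fixed t m hm] using isMinOn_iff.1 hp m hm
  by_cases hright : ∃ T, ∀ k, SameComponent V (x 0) p k → x 0 p ≤ x T k
  · obtain ⟨T, hT⟩ := hright
    refine .inl <| (eventually_ge_atTop T).mono fun t ht => ?_
    exact (h.fixed t p hpF).trans_le (h.forall_ge_of_le hT ht m hpm)
  push Not at hright
  obtain ⟨a, hpa, ha, haP⟩ := h.toIsExecution.exists_leftmost_below (fun f hf => hp hf) hright
  have hap : Visible V (x 0) a p := h.visible_faulty_of_isMinOn hV ha haP hp hpa.symm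
  by_cases ham : Visible V (x 0) a m
  · refine .inr <| (eventually_ge_atTop 1).mono fun t ht => ?_
    obtain ⟨s, rfl⟩ := Nat.exists_eq_add_of_le' ht
    exact (h.neighbour_succ_le_leftmost hV ha haP hm ham s).trans
      ((haP (s + 1)).trans_eq (h.fixed (s + 1) p hpF).symm)
  · refine .inl <| .of_forall fun t => ?_
    by_contra! hmp
    have ham_le := ha.le t m (hpa.symm.trans hpm)
    have hap_le := abs_le.1 (h.visible hap t)
    exact ham (h.visible (s := t) (abs_le.2 ⟨by linarith, by linarith⟩) 0)

lemma eventuallyLE_total_of_mem [Finite ι] (h : IsSettledExecution V F x) (hV : 0 < V)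
    (hpF : p ∈ F) (hp : IsMinOn (x 0) F p ∨ IsMaxOn (x 0) F p)
    (hpm : SameComponent V (x 0) p m) :
    (x · p) ≤ᶠ[atTop] (x · m) ∨ (x · m) ≤ᶠ[atTop] (x · p) := by
  rcases hp with hp | hp
  · exact h.eventuallyLE_total_of_isMinOn hV hpF hp hpm
  · have hneg := h.neg.eventuallyLE_total_of_isMinOn hV hpF hp.neg (sameComponent_neg.2 hpm)
    simpa only [EventuallyLE, Pi.neg_apply, neg_le_neg_iff, or_comm] using hneg

lemma eventuallyLE_total [Finite ι] (h : IsSettledExecution V F x) (hV : 0 < V)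
    (hF : ∀ p ∈ F, IsMinOn (x 0) F p ∨ IsMaxOn (x 0) F p)
    (hij : SameComponent V (x 0) i j) :
    (x · i) ≤ᶠ[atTop] (x · j) ∨ (x · j) ≤ᶠ[atTop] (x · i) := by
  by_cases hi : i ∈ F
  · exact h.eventuallyLE_total_of_mem hV hi (hF i hi) hij
  by_cases hj : j ∈ F
  · exact (h.eventuallyLE_total_of_mem hV hj (hF j hj) hij.symm).symm
  exact (le_total (x 0 i) (x 0 j)).imp (fun hle => .of_forall (h.le_of_zero_le hi hj hle))
    fun hle => .of_forall (h.le_of_zero_le hj hi hle)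

lemma exists_eventually_isFarthestRight [Finite ι] (h : IsSettledExecution V F x) (hV : 0 < V)
    (hF : ∀ p ∈ F, IsMinOn (x 0) F p ∨ IsMaxOn (x 0) F p) (i : ι) :
    ∃ b, ∀ᶠ t in atTop, IsFarthestRight V (x t) i b := by
  let N := {k // Visible V (x 0) i k}
  have : Nonempty N := ⟨i, Visible.refl hV.le (x 0) i⟩
  have hdir : Directed (EventuallyLE atTop) fun (k : N) t => x t k := fun j k =>
    (h.eventuallyLE_total hV hF (.head j.2.symm (.single k.2))).elim
      (fun hjk => ⟨k, hjk, .rfl⟩) fun hkj => ⟨j, .rfl, hkj⟩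
  obtain ⟨b, hb⟩ := hdir.finite_le id
  refine ⟨b, (eventually_all.2 hb).mono fun t ht => ?_⟩
  exact ⟨h.visible b.2 t, fun k hk => ht ⟨k, h.visible hk 0⟩⟩

end IsSettledExecution

namespace IsExecution

variable {ι : Type*} [Finite ι] {V : ℝ} {F : Set ι} {x : ℕ → ι → ℝ}

lemma exists_eventually_isFarthestRight (h : IsExecution V F x) (hV : 0 < V)
    (hF : ∀ p ∈ F, IsMinOn (x 0) F p ∨ IsMaxOn (x 0) F p) (i : ι) :
    ∃ b, ∀ᶠ t in atTop, IsFarthestRight V (x t) i b := by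
  obtain ⟨T, hT⟩ := h.exists_shift_isSettledExecution
  have hF_shift : ∀ p ∈ F, IsMinOn (x (0 + T)) F p ∨ IsMaxOn (x (0 + T)) F p := by
    have heq : Set.EqOn (x 0) (x (0 + T)) F := fun f hf => (h.fixed (0 + T) f hf).symm
    exact fun p hp => (hF p hp).imp (·.congr heq.eventuallyEq (heq hp))
      (·.congr heq.eventuallyEq (heq hp))
  obtain ⟨b, hb⟩ := hT.exists_eventually_isFarthestRight hV hF_shift i
  rw [← eventually_map (m := (· + T)) (P := fun t => IsFarthestRight V (x t) i b),
    map_add_atTop_eq_nat] at hb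
  exact ⟨b, hb⟩

lemma exists_eventually_isFarthestLeft (h : IsExecution V F x) (hV : 0 < V)
    (hF : ∀ p ∈ F, IsMinOn (x 0) F p ∨ IsMaxOn (x 0) F p) (i : ι) :
    ∃ a, ∀ᶠ t in atTop, IsFarthestLeft V (x t) i a := by
  have hF_neg : ∀ p ∈ F, IsMinOn (-x 0) F p ∨ IsMaxOn (-x 0) F p := fun p hp =>
    (hF p hp).symm.imp IsMaxOn.neg IsMinOn.neg
  simpa only [Pi.neg_apply, isFarthestRight_neg] using
    h.neg.exists_eventually_isFarthestRight hV hF_neg i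

end IsExecution

lemma isExecution_of_lpos_rpos {n : ℕ} {V : ℝ} (hV : 0 ≤ V) {F : Set (Fin (n + 1))}
    {x : ℕ → Fin (n + 1) → ℝ} (hfixed : ∀ t, ∀ i ∈ F, x t i = x 0 i)
    (hupd : ∀ t, ∀ i ∉ F, x (t + 1) i = (lpos V x t i + rpos V x t i) / 2) :
    IsExecution V F x where
  fixed := hfixed
  midpoint t i hi := by
    obtain ⟨a, ha⟩ := exists_isFarthestLeft hV (x t) i
    obtain ⟨b, hb⟩ := exists_isFarthestRight hV (x t) i
    exact ⟨a, b, ha, hb, by rw [hupd t i hi, ha.eq_lpos, hb.eq_rpos]⟩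

/-- The condition `hextreme` says that the faulty robots occupy at most two places. -/
theorem preserved_farthest_neighbours_general (n : ℕ) (V : ℝ) (hV : 0 < V)
    (F : Set (Fin (n + 1))) (x : ℕ → Fin (n + 1) → ℝ)
    (hfixed : ∀ t, ∀ i ∈ F, x t i = x 0 i)
    (hextreme : ∀ p ∈ F, IsMinOn (x 0) F p ∨ IsMaxOn (x 0) F p)
    (hupd : ∀ t, ∀ i ∉ F, x (t + 1) i = (lpos V x t i + rpos V x t i) / 2) :
    ∃ t₀ : ℕ, ∃ ρ lam : Fin (n + 1) → Fin (n + 1), ∀ t : ℕ, t₀ ≤ t → ∀ i : Fin (n + 1),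
      (|x t (ρ i) - x t i| ≤ V ∧ x t (ρ i) = rpos V x t i) ∧
      (|x t (lam i) - x t i| ≤ V ∧ x t (lam i) = lpos V x t i) := by
  have h : IsExecution V F x := isExecution_of_lpos_rpos hV.le hfixed hupd
  choose ρ hρ using h.exists_eventually_isFarthestRight hV hextreme
  choose lam hlam using h.exists_eventually_isFarthestLeft hV hextreme
  obtain ⟨t₀, ht₀⟩ := eventually_atTop.1 ((eventually_all.2 hρ).and (eventually_all.2 hlam))
  refine ⟨t₀, ρ, lam, fun t ht i => ?_⟩
  obtain ⟨hright, hleft⟩ := ht₀ t ht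
  exact ⟨⟨(hright i).1, (hright i).eq_rpos⟩, ⟨(hleft i).1, (hleft i).eq_lpos⟩⟩

/-- (Preserved Farthest Neighbours) From some time on, the farthest right and
farthest left visible neighbours of every robot are realized by fixed robots. -/
theorem preserved_farthest_neighbours
    (n : ℕ) (hn : 2 ≤ n) (V D : ℝ) (hV : 0 < V) (hD : 0 < D)
    (x : ℕ → Fin (n + 1) → ℝ)
    (hfault0 : ∀ t : ℕ, x t 0 = 0)
    (hfaultn : ∀ t : ℕ, x t (Fin.last n) = D)
    (hupd : ∀ t : ℕ, ∀ i : Fin (n + 1), i ≠ 0 → i ≠ Fin.last n →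
      x (t + 1) i = (lpos V x t i + rpos V x t i) / 2)
    (hconn : ∀ i j : Fin (n + 1),
      Relation.ReflTransGen (fun a b : Fin (n + 1) => |x 0 a - x 0 b| ≤ V) i j)
    : ∃ t₀ : ℕ, ∃ ρ lam : Fin (n + 1) → Fin (n + 1),
      ∀ t : ℕ, t₀ ≤ t → ∀ i : Fin (n + 1),
        (|x t (ρ i) - x t i| ≤ V ∧ x t (ρ i) = rpos V x t i) ∧
        (|x t (lam i) - x t i| ≤ V ∧ x t (lam i) = lpos V x t i) := by
  refine preserved_farthest_neighbours_general n V hV {0, Fin.last n} x ?_ ?_ ?_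
  · simp [hfault0, hfaultn]
  · simp [isMinOn_iff, isMaxOn_iff, hfault0, hfaultn, hD.le]
  · simpa using hupd
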